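/- arXiv:1808.04642 — 2 statements merged into one kernel-verified Lean document; each statement's English description precedes it below -/
import Mathlib

section
/- Let (W,U,N) be a polarity, ε an order type over n, R a g-type relation with order type ε, and 1 ≤ i ≤ n with ε(i) = 1. Suppose that for every j ≠ i the set Y_j ⊆ U^ε(j) is Galois-stable. Then for every Z ⊆ U, R⁰[Ȳⁱ_Z] = R⁰[Ȳⁱ_{(Z↓)↑}]. (Lemma 3.5, item 2(i).) -/
universe u

/-- For `X ⊆ W`, `up N X = X↑ = {u ∈ U : N x u for all x ∈ X}`. -/
def up {W U : Type u} (N : W → U → Prop) (X : Set W) : Set U := {u | ∀ x ∈ X, N x u}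

/-- For `Y ⊆ U`, `dn N Y = Y↓ = {w ∈ W : N w u for all u ∈ Y}`. -/
def dn {W U : Type u} (N : W → U → Prop) (Y : Set U) : Set W := {w | ∀ u ∈ Y, N w u}

/-- A subset `X ⊆ W` is Galois-stable if `X = (X↑)↓`. -/
def stableW {W U : Type u} (N : W → U → Prop) (X : Set W) : Prop := X = dn N (up N X)

/-- A subset `Y ⊆ U` is Galois-stable if `Y = (Y↓)↑`. -/
def stableU {W U : Type u} (N : W → U → Prop) (Y : Set U) : Prop := Y = up N (dn N Y)

/-- `coordType W U b` is `W` if `b = true` (order type 1) and `U` if `b = false` (order type ∂). -/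
def coordType (W U : Type u) (b : Bool) : Type u := cond b W U

/-- `S⁰[C̄] = {a : (a, b̄) ∈ S for all b̄ ∈ C₁ × ⋯ × Cₙ}`. -/
def rel0 {A : Type u} {n : ℕ} {B : Fin n → Type u} (S : A → (∀ i, B i) → Prop)
    (C : ∀ i, Set (B i)) : Set A :=
  {a | ∀ b : ∀ i, B i, (∀ i, b i ∈ C i) → S a b}

/-- `Sⁱ[A', C̄ⁱ] = {x ∈ B i : (a, b̄ⁱ_x) ∈ S for all a ∈ A' and all b_j ∈ C_j (j ≠ i)}`
(the `i`-th entry of `C` is ignored). -/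
def reli {A : Type u} {n : ℕ} {B : Fin n → Type u} (S : A → (∀ i, B i) → Prop)
    (i : Fin n) (A' : Set A) (C : ∀ j, Set (B j)) : Set (B i) :=
  {x | ∀ a ∈ A', ∀ b : ∀ j, B j, (∀ j, j ≠ i → b j ∈ C j) → S a (Function.update b i x)}

/-- Galois-stability for a subset of `U^ε(i)` (as a subset of `U` or of `W` accordingly). -/
def coordStableG {W U : Type u} (N : W → U → Prop) :
    (b : Bool) → Set (coordType U W b) → Prop
  | true, Y => stableU N Y
  | false, X => stableW N X

/-- `R` is a g-type relation with order type `ε`: `R ⊆ W × U^ε(1) × ⋯ × U^ε(n)` such that the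
sets `R⁰[{ū}]` and `Rⁱ[{w}, {ū}ⁱ]` are all Galois-stable. -/
def isGType {W U : Type u} (N : W → U → Prop) {n : ℕ} (ε : Fin n → Bool)
    (R : W → (∀ i, coordType U W (ε i)) → Prop) : Prop :=
  (∀ v : ∀ i, coordType U W (ε i),
    stableW N (rel0 R fun i => ({v i} : Set (coordType U W (ε i))))) ∧
  (∀ (w : W) (v : ∀ i, coordType U W (ε i)) (i : Fin n),
    coordStableG N (ε i) (reli R i {w} fun j => ({v j} : Set (coordType U W (ε j)))))

/-- The Galois closure on subsets of `U^ε(i)`: `(·↓)↑` on subsets of `U`, `(·↑)↓` on subsets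
of `W`. -/
def coordClG {W U : Type u} (N : W → U → Prop) :
    (b : Bool) → Set (coordType U W b) → Set (coordType U W b)
  | true, Y => up N (dn N Y)
  | false, X => dn N (up N X)

/-!
For fixed `i` and `C`, the maps `Z ↦ S⁰[C̄ⁱ_Z]` and `A' ↦ Sⁱ[A', C̄ⁱ]` form an antitone Galois
connection between the subsets of `B i` and those of `A`. Since `Sⁱ[A', C̄ⁱ]` is an intersection of
sections `Sⁱ[{a}, {b̄}ⁱ]`, it is closed as soon as these are, and then it contains `Z` iff it
contains the closure of `Z`.
-/

section Sections

variable {A : Type u} {n : ℕ} {B : Fin n → Type u} {S : A → (∀ j, B j) → Prop} {i : Fin n}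
  {A' : Set A} {C : ∀ j, Set (B j)}

theorem subset_rel0_update_iff {Z : Set (B i)} :
    A' ⊆ rel0 S (Function.update C i Z) ↔ Z ⊆ reli S i A' C := by
  constructor
  · intro h x hx a ha b hb
    refine h ha _ ((Function.forall_update_iff C fun j s => Function.update b i x j ∈ s).2 ⟨?_, ?_⟩)
    · rwa [Function.update_self]
    · intro j hj
      rw [Function.update_of_ne hj]
      exact hb j hj
  · intro h a ha b hb
    obtain ⟨hbi, hbC⟩ := (Function.forall_update_iff C fun j s => b j ∈ s).1 hb
    rw [← Function.update_eq_self i b]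
    exact h hbi a ha b hbC

theorem reli_subset_reli_singleton {a : A} (ha : a ∈ A') {b : ∀ j, B j}
    (hb : ∀ j, j ≠ i → b j ∈ C j) :
    reli S i A' C ⊆ reli S i {a} fun j => {b j} := by
  rintro x hx _ rfl b' hb'
  refine hx _ ha b' fun j hj => ?_
  rw [Set.mem_singleton_iff.1 (hb' j hj)]
  exact hb j hj

theorem isClosed_reli {c : ClosureOperator (Set (B i))}
    (hS : ∀ (a : A) (b : ∀ j, B j), c.IsClosed (reli S i {a} fun j => {b j})) :
    c.IsClosed (reli S i A' C) := by
  refine ClosureOperator.isClosed_iff_closure_le.2 fun x hx a ha b hb => ?_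
  have hx' : x ∈ reli S i {a} fun j => {b j} :=
    ClosureOperator.closure_min (reli_subset_reli_singleton ha hb) (hS a b) hx
  exact hx' a rfl b fun _ _ => rfl

theorem gType_rel0_closure_one_general (c : ClosureOperator (Set (B i)))
    (hS : ∀ (a : A) (b : ∀ j, B j), c.IsClosed (reli S i {a} fun j => {b j})) (Z : Set (B i)) :
    rel0 S (Function.update C i Z) = rel0 S (Function.update C i (c Z)) :=
  eq_of_forall_le_iff fun A' => calc
    A' ⊆ rel0 S (Function.update C i Z) ↔ Z ⊆ reli S i A' C := subset_rel0_update_iff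
    _ ↔ c Z ⊆ reli S i A' C := (isClosed_reli hS).closure_le_iff.symm
    _ ↔ A' ⊆ rel0 S (Function.update C i (c Z)) := subset_rel0_update_iff.symm

end Sections

section Polarity

variable {W U : Type u} (N : W → U → Prop) (b : Bool)

theorem subset_coordClG (Z : Set (coordType U W b)) : Z ⊆ coordClG N b Z :=
  match b with
  | true => subset_upperPolar_lowerPolar N Z
  | false => subset_lowerPolar_upperPolar N Z

theorem coordClG_mono : Monotone (coordClG N b) :=
  match b with
  | true => upperPolar_lowerPolar_monotone N
  | false => lowerPolar_upperPolar_monotone N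

theorem coordStableG_iff_coordClG_eq {Z : Set (coordType U W b)} :
    coordStableG N b Z ↔ coordClG N b Z = Z :=
  match b with
  | true => eq_comm
  | false => eq_comm

theorem coordClG_idem (Z : Set (coordType U W b)) :
    coordClG N b (coordClG N b Z) = coordClG N b Z :=
  match b with
  | true => congrArg (upperPolar N) (lowerPolar_upperPolar_lowerPolar N Z)
  | false => congrArg (lowerPolar N) (upperPolar_lowerPolar_upperPolar N Z)

/-- The Galois closure `coordClG N b` as a closure operator. Its closed sets are, definitionally,
the Galois-stable sets. -/
def coordClosure : ClosureOperator (Set (coordType U W b)) where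
  toFun := coordClG N b
  monotone' := coordClG_mono N b
  le_closure' := subset_coordClG N b
  idempotent' := coordClG_idem N b
  IsClosed := coordStableG N b
  isClosed_iff := coordStableG_iff_coordClG_eq N b

end Polarity

/-- Lemma 3.5, item 2(i): if `ε(i) = 1` and `Y_j` is Galois-stable for all `j ≠ i`, then for
every `Z ⊆ U`, `R⁰[Ȳⁱ_Z] = R⁰[Ȳⁱ_{(Z↓)↑}]`. -/
theorem gType_rel0_closure_one {W U : Type u} (N : W → U → Prop) {n : ℕ} (ε : Fin n → Bool)
    (R : W → (∀ i, coordType U W (ε i)) → Prop) (hR : isGType N ε R)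
    (i : Fin n) (hi : ε i = true)
    (Y : ∀ j, Set (coordType U W (ε j)))
    (hY : ∀ j, j ≠ i → coordStableG N (ε j) (Y j))
    (Z : Set (coordType U W (ε i))) :
    rel0 R (Function.update Y i Z) = rel0 R (Function.update Y i (coordClG N (ε i) Z)) :=
  gType_rel0_closure_one_general (coordClosure N (ε i)) (fun w v => hR.2 w v i) Z
end

section
/- Let (W,U,N) be a polarity, ε an order type over n, R a g-type relation with order type ε, and 1 ≤ i ≤ n with ε(i) = 1. Let X_j ⊆ W be Galois-stable for every j ≠ i, and let 𝒳 be any family of Galois-stable subsets of W. Then ⋂_{Z ∈ 𝒳} g_R(X̄ⁱ_Z) = g_R(X̄ⁱ_{⋂𝒳}). (Proposition 3.7, case g with ε(i) = 1: g_R is completely meet-preserving in its i-th coordinate.) -/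
universe u

/-- The `i`-th entry of `X̄^ε`: `X_i↑` if `ε(i) = 1` and `X_i` if `ε(i) = ∂`. -/
def epsCoordG {W U : Type u} (N : W → U → Prop) :
    (b : Bool) → Set W → Set (coordType U W b)
  | true, X => up N X
  | false, X => X

/-- `g_R(X̄) := R⁰[X̄^ε]`. -/
def gR {W U : Type u} (N : W → U → Prop) {n : ℕ} (ε : Fin n → Bool)
    (R : W → (∀ i, coordType U W (ε i)) → Prop) (X : Fin n → Set W) : Set W :=
  rel0 R fun i => epsCoordG N (ε i) (X i)

/-! In its `i`-th argument, `R⁰[C̄]` is residuated with the section `Rⁱ[{w}, C̄ⁱ]`, so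
`w ∈ g_R(X̄ⁱ_Z)` says that `Z↑` is included in the section `S` of `R` at `w` and the other entries
of `X̄^ε`. A section over arbitrary sets is an intersection of sections over points, so `S` is
Galois-stable. For stable `Z` and `S` the inclusion `Z↑ ⊆ S` is equivalent to `S↓ ⊆ Z`, and this
holds for every `Z ∈ 𝒳` iff it holds for `⋂ 𝒳`. -/

section Stability

variable {W U : Type u} {N : W → U → Prop}

theorem stableW_iff_isExtent {X : Set W} : stableW N X ↔ Order.IsExtent N X :=
  eq_comm.trans Order.isExtent_iff.symm

theorem stableU_iff_isIntent {Y : Set U} : stableU N Y ↔ Order.IsIntent N Y :=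
  eq_comm.trans Order.isIntent_iff.symm

theorem stableW_sInter {𝒳 : Set (Set W)} (h𝒳 : ∀ Z ∈ 𝒳, stableW N Z) : stableW N (⋂₀ 𝒳) := by
  rw [Set.sInter_eq_biInter, stableW_iff_isExtent]
  exact Order.IsExtent.iInter₂ _ fun Z hZ => stableW_iff_isExtent.1 (h𝒳 Z hZ)

theorem coordStableG_iInter {b : Bool} {ι : Sort*} {Y : ι → Set (coordType U W b)}
    (hY : ∀ k, coordStableG N b (Y k)) : coordStableG N b (⋂ k, Y k) := by
  cases b with
  | true => exact stableU_iff_isIntent.2 (Order.IsIntent.iInter Y fun k =>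
      stableU_iff_isIntent.1 (hY k))
  | false => exact stableW_iff_isExtent.2 (Order.IsExtent.iInter Y fun k =>
      stableW_iff_isExtent.1 (hY k))

theorem up_subset_iff_dn_subset {X : Set W} {Y : Set U} (hX : stableW N X) (hY : stableU N Y) :
    up N X ⊆ Y ↔ dn N Y ⊆ X := by
  constructor
  · intro h
    rw [hX]
    exact lowerPolar_anti N h
  · intro h
    rw [hY]
    exact upperPolar_anti N h

theorem up_sInter_subset_iff {𝒳 : Set (Set W)} (h𝒳 : ∀ Z ∈ 𝒳, stableW N Z) {Y : Set U}
    (hY : stableU N Y) : up N (⋂₀ 𝒳) ⊆ Y ↔ ∀ Z ∈ 𝒳, up N Z ⊆ Y :=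
  calc
    up N (⋂₀ 𝒳) ⊆ Y ↔ dn N Y ⊆ ⋂₀ 𝒳 := up_subset_iff_dn_subset (stableW_sInter h𝒳) hY
    _ ↔ ∀ Z ∈ 𝒳, dn N Y ⊆ Z := Set.subset_sInter_iff
    _ ↔ ∀ Z ∈ 𝒳, up N Z ⊆ Y :=
      forall₂_congr fun Z hZ => (up_subset_iff_dn_subset (h𝒳 Z hZ) hY).symm

theorem epsCoordG_sInter_subset_iff {b : Bool} (hb : b = true) {𝒳 : Set (Set W)}
    (h𝒳 : ∀ Z ∈ 𝒳, stableW N Z) {Y : Set (coordType U W b)} (hY : coordStableG N b Y) :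
    epsCoordG N b (⋂₀ 𝒳) ⊆ Y ↔ ∀ Z ∈ 𝒳, epsCoordG N b Z ⊆ Y := by
  subst hb
  exact up_sInter_subset_iff h𝒳 hY

end Stability

section Relation

variable {A : Type u} {n : ℕ} {B : Fin n → Type u}

theorem mem_rel0_update_iff (S : A → (∀ i, B i) → Prop) (C : ∀ i, Set (B i)) (i : Fin n)
    (D : Set (B i)) (a : A) : a ∈ rel0 S (Function.update C i D) ↔ D ⊆ reli S i {a} C := by
  constructor
  · rintro h x hx _ rfl b hb
    refine h _ fun j => ?_
    rcases eq_or_ne j i with rfl | hj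
    · simpa using hx
    · simpa [hj] using hb j hj
  · intro h b hb
    have hbi : b i ∈ D := by simpa using hb i
    simpa using h hbi a rfl b fun j hj => by simpa [hj] using hb j

theorem mem_reli_singleton (S : A → (∀ i, B i) → Prop) (i : Fin n) (a : A) (v : ∀ j, B j)
    (x : B i) : x ∈ reli S i {a} (fun j => {v j}) ↔ S a (Function.update v i x) := by
  refine ⟨fun h => h a rfl v fun _ _ => rfl, ?_⟩
  rintro h _ rfl b hb
  have hbv : Function.update b i x = Function.update v i x :=
    Function.update_eq_iff.2 ⟨by simp, fun j hj => by simpa [hj] using hb j hj⟩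
  rwa [hbv]

theorem reli_eq_iInter_singleton (S : A → (∀ i, B i) → Prop) (i : Fin n) (A' : Set A)
    (C : ∀ j, Set (B j)) :
    reli S i A' C =
      ⋂ (a ∈ A') (v : ∀ j, B j) (_ : ∀ j, j ≠ i → v j ∈ C j), reli S i {a} fun j => {v j} := by
  ext x
  simp only [Set.mem_iInter, mem_reli_singleton]
  rfl

end Relation

section GType

variable {W U : Type u} (N : W → U → Prop) {n : ℕ} (ε : Fin n → Bool)
  (R : W → (∀ i, coordType U W (ε i)) → Prop) (i : Fin n)

theorem mem_gR_update_iff (X : Fin n → Set W) (Z : Set W) (w : W) :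
    w ∈ gR N ε R (Function.update X i Z) ↔
      epsCoordG N (ε i) Z ⊆ reli R i {w} fun j => epsCoordG N (ε j) (X j) := by
  simp only [gR, Function.apply_update (fun j => epsCoordG N (ε j)), mem_rel0_update_iff]

variable {N ε R i}

theorem coordStableG_reli
    (hR : ∀ (w : W) (v : ∀ j, coordType U W (ε j)),
      coordStableG N (ε i) (reli R i {w} fun j => {v j}))
    (A' : Set W) (C : ∀ j, Set (coordType U W (ε j))) :
    coordStableG N (ε i) (reli R i A' C) := by
  rw [reli_eq_iInter_singleton]
  exact coordStableG_iInter fun w => coordStableG_iInter fun _ =>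
    coordStableG_iInter fun v => coordStableG_iInter fun _ => hR w v

theorem gR_completely_meet_preserving_general
    (hR : ∀ (w : W) (v : ∀ j, coordType U W (ε j)),
      coordStableG N (ε i) (reli R i {w} fun j => {v j})) (hi : ε i = true)
    (X : Fin n → Set W) {𝒳 : Set (Set W)} (h𝒳 : ∀ Z ∈ 𝒳, stableW N Z) :
    (⋂ Z ∈ 𝒳, gR N ε R (Function.update X i Z))
      = gR N ε R (Function.update X i (⋂₀ 𝒳)) := by
  ext w
  simp only [Set.mem_iInter, mem_gR_update_iff]
  exact (epsCoordG_sInter_subset_iff hi h𝒳 (coordStableG_reli hR {w} _)).symm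

end GType

/-- Proposition 3.7, case `g` with `ε(i) = 1`: `g_R` is completely meet-preserving in its `i`-th
coordinate: `⋂_{Z ∈ 𝒳} g_R(X̄ⁱ_Z) = g_R(X̄ⁱ_{⋂𝒳})`. -/
theorem gR_completely_meet_preserving {W U : Type u} (N : W → U → Prop) {n : ℕ}
    (ε : Fin n → Bool)
    (R : W → (∀ i, coordType U W (ε i)) → Prop) (hR : isGType N ε R)
    (i : Fin n) (hi : ε i = true)
    (X : Fin n → Set W) (hX : ∀ j, j ≠ i → stableW N (X j))
    (𝒳 : Set (Set W)) (h𝒳 : ∀ Z ∈ 𝒳, stableW N Z) :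
    (⋂ Z ∈ 𝒳, gR N ε R (Function.update X i Z))
      = gR N ε R (Function.update X i (⋂₀ 𝒳)) :=
  gR_completely_meet_preserving_general (hR.2 · · i) hi X h𝒳
end
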